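/- Let $k > s \ge 1$ be integers and $n > 2k - s$. If $\mathcal{A}, \mathcal{B} \subseteq \binom{[n]}{k}$ are non-empty families with $|A \cap B| \ge s$ for all $A \in \mathcal{A}$, $B \in \mathcal{B}$, then $|\mathcal{A}| + |\mathcal{B}| \le |\mathcal{C}| + 1$, where $\mathcal{C} = \{C \in \binom{[n]}{k} : |C \cap [k]| \ge s\}$. -/

import Mathlib

/-!
If `𝒜` and `ℬ` are cross-intersecting, then `ℬ` lies in the polar `𝒜°` of all sets meeting every
member of `𝒜` in at least `s` points, so one has to bound `|𝒜| + |𝒜°|` when both are nonempty.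
This weight is supermodular in `𝒜`, and it does not decrease when `𝒜` is replaced by `𝒜°`, so the
smallest families of maximal weight (the atoms, as in Hamidoune's isoperimetric method) are pairwise
disjoint. Hence an atom is a block for the symmetric group acting on `k`-sets, and such a block is
either everything, or a single set `{a}`, or a pair `{a, aᶜ}`. The first has empty polar, the second
has the weight `|𝒞| + 1`, and in the third the polar misses `a`, so the weight is no larger.
-/

open Finset MulAction
open scoped Pointwise

section PolarAtom

variable {Ω : Type*} {r : Ω → Ω → Prop} {S T : Set Ω}

/-- The quantity `|S| + |S°|`, where `S°` is the polar of `S`. Cardinalities are `Set.ncard`, so it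
is meaningful only on finite types. -/
noncomputable def polarWeight (r : Ω → Ω → Prop) (S : Set Ω) : ℕ :=
  S.ncard + (upperPolar r S).ncard

/-- An atom of `r`: a set of maximal weight among the nonempty sets with nonempty polar, and of
least cardinality among those of maximal weight. -/
structure IsPolarAtom (r : Ω → Ω → Prop) (S : Set Ω) : Prop where
  nonempty : S.Nonempty
  upperPolar_nonempty : (upperPolar r S).Nonempty
  polarWeight_le : ∀ ⦃T : Set Ω⦄, T.Nonempty → (upperPolar r T).Nonempty →
    polarWeight r T ≤ polarWeight r S
  ncard_le : ∀ ⦃T : Set Ω⦄, T.Nonempty → (upperPolar r T).Nonempty →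
    polarWeight r S ≤ polarWeight r T → S.ncard ≤ T.ncard

theorem exists_isPolarAtom [Finite Ω] (hS : S.Nonempty) (hS' : (upperPolar r S).Nonempty) :
    ∃ T, IsPolarAtom r T := by
  let 𝒮 : Set (Set Ω) := {U | U.Nonempty ∧ (upperPolar r U).Nonempty}
  obtain ⟨M, hM, hMmax⟩ := 𝒮.exists_max_image (polarWeight r) 𝒮.toFinite ⟨S, hS, hS'⟩
  let 𝒯 : Set (Set Ω) := {U ∈ 𝒮 | polarWeight r M ≤ polarWeight r U}
  obtain ⟨T, ⟨hT, hMT⟩, hTmin⟩ := 𝒯.exists_min_image Set.ncard 𝒯.toFinite ⟨M, hM, le_rfl⟩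
  exact ⟨T, hT.1, hT.2, fun U hU hU' ↦ (hMmax U ⟨hU, hU'⟩).trans hMT,
    fun U hU hU' hTU ↦ hTmin U ⟨⟨hU, hU'⟩, hMT.trans hTU⟩⟩

theorem upperPolar_union_subset_upperPolar_inter (r : Ω → Ω → Prop) (S T : Set Ω) :
    upperPolar r S ∪ upperPolar r T ⊆ upperPolar r (S ∩ T) :=
  Set.union_subset (upperPolar_anti r Set.inter_subset_left)
    (upperPolar_anti r Set.inter_subset_right)

theorem polarWeight_add_polarWeight_le [Finite Ω] (r : Ω → Ω → Prop) (S T : Set Ω) :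
    polarWeight r S + polarWeight r T ≤ polarWeight r (S ∩ T) + polarWeight r (S ∪ T) := by
  have hST := Set.ncard_union_add_ncard_inter S T
  have hpolar := Set.ncard_union_add_ncard_inter (upperPolar r S) (upperPolar r T)
  have hsub := Set.ncard_le_ncard (upperPolar_union_subset_upperPolar_inter r S T)
  rw [← upperPolar_union] at hpolar
  unfold polarWeight
  omega

namespace IsPolarAtom

theorem polarWeight_eq (hS : IsPolarAtom r S) (hT : IsPolarAtom r T) :
    polarWeight r S = polarWeight r T :=
  (hT.polarWeight_le hS.nonempty hS.upperPolar_nonempty).antisymm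
    (hS.polarWeight_le hT.nonempty hT.upperPolar_nonempty)

theorem ncard_eq (hS : IsPolarAtom r S) (hT : IsPolarAtom r T) : S.ncard = T.ncard :=
  (hS.ncard_le hT.nonempty hT.upperPolar_nonempty (hS.polarWeight_eq hT).le).antisymm
    (hT.ncard_le hS.nonempty hS.upperPolar_nonempty (hT.polarWeight_eq hS).le)

theorem ncard_le_ncard_upperPolar [Finite Ω] [Std.Symm r] (hS : IsPolarAtom r S) :
    S.ncard ≤ (upperPolar r S).ncard := by
  have hbipolar : S ⊆ upperPolar r (upperPolar r S) := fun a ha b hb ↦ symm (hb ha)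
  refine hS.ncard_le hS.upperPolar_nonempty (hS.nonempty.mono hbipolar) ?_
  have := Set.ncard_le_ncard hbipolar
  unfold polarWeight
  omega

theorem upperPolar_union_nonempty [Finite Ω] [Std.Symm r] (hS : IsPolarAtom r S)
    (hT : IsPolarAtom r T) (hST : (S ∩ T).Nonempty) : (upperPolar r (S ∪ T)).Nonempty := by
  by_contra hempty
  rw [Set.not_nonempty_iff_eq_empty, upperPolar_union, ← Set.disjoint_iff_inter_eq_empty] at hempty
  have hsub := upperPolar_union_subset_upperPolar_inter r S T
  have hpolar := (Set.ncard_union_eq hempty).ge.trans (Set.ncard_le_ncard hsub)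
  have hle := hS.polarWeight_le hST (hS.upperPolar_nonempty.mono (Set.subset_union_left.trans hsub))
  have hpos := hST.ncard_pos
  have hcard := hS.ncard_eq hT
  have hdual := hT.ncard_le_ncard_upperPolar
  unfold polarWeight at hle
  omega

theorem eq_of_inter_nonempty [Finite Ω] [Std.Symm r] (hS : IsPolarAtom r S)
    (hT : IsPolarAtom r T) (hST : (S ∩ T).Nonempty) : S = T := by
  have hunion := hT.polarWeight_le (hS.nonempty.mono Set.subset_union_left)
    (hS.upperPolar_union_nonempty hT hST)
  have hinter : S.ncard ≤ (S ∩ T).ncard := by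
    refine hS.ncard_le hST
      (hS.upperPolar_nonempty.mono (upperPolar_anti r Set.inter_subset_left)) ?_
    have := polarWeight_add_polarWeight_le r S T
    omega
  have hsub : S ⊆ T :=
    Set.inter_eq_left.mp (Set.eq_of_subset_of_ncard_le Set.inter_subset_left hinter)
  exact Set.eq_of_subset_of_ncard_le hsub (hT.ncard_eq hS).le

end IsPolarAtom

variable {G : Type*} [Group G] [MulAction G Ω]

theorem upperPolar_smul (hG : ∀ (g : G) a b, r (g • a) (g • b) ↔ r a b) (g : G) (S : Set Ω) :
    upperPolar r (g • S) = g • upperPolar r S := by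
  ext b
  have hb (a : Ω) : r (g • a) b ↔ r a (g⁻¹ • b) := by
    rw [← hG g a (g⁻¹ • b), smul_inv_smul]
  rw [Set.mem_smul_set_iff_inv_smul_mem, mem_upperPolar_iff, mem_upperPolar_iff, ← Set.image_smul,
    Set.forall_mem_image]
  simp only [hb]

theorem polarWeight_smul (hG : ∀ (g : G) a b, r (g • a) (g • b) ↔ r a b) (g : G) (S : Set Ω) :
    polarWeight r (g • S) = polarWeight r S := by
  simp only [polarWeight, upperPolar_smul hG, Set.ncard_smul_set]

theorem IsPolarAtom.smul (hG : ∀ (g : G) a b, r (g • a) (g • b) ↔ r a b)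
    (hS : IsPolarAtom r S) (g : G) : IsPolarAtom r (g • S) where
  nonempty := hS.nonempty.smul_set
  upperPolar_nonempty := by
    rw [upperPolar_smul hG]
    exact hS.upperPolar_nonempty.smul_set
  polarWeight_le := by
    rw [polarWeight_smul hG]
    exact hS.polarWeight_le
  ncard_le := by
    rw [polarWeight_smul hG, Set.ncard_smul_set]
    exact hS.ncard_le

theorem IsPolarAtom.isBlock [Finite Ω] [Std.Symm r]
    (hG : ∀ (g : G) a b, r (g • a) (g • b) ↔ r a b) (hS : IsPolarAtom r S) : IsBlock G S :=
  isBlock_iff_smul_eq_of_nonempty.mpr fun g hg ↦ (hS.smul hG g).eq_of_inter_nonempty hS hg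

theorem ncard_upperPolar_singleton_eq [IsPretransitive G Ω]
    (hG : ∀ (g : G) a b, r (g • a) (g • b) ↔ r a b) (a b : Ω) :
    (upperPolar r {a}).ncard = (upperPolar r {b}).ncard := by
  obtain ⟨g, rfl⟩ := exists_smul_eq G a b
  rw [← Set.smul_set_singleton, upperPolar_smul hG, Set.ncard_smul_set]

end PolarAtom

section Block

variable {α : Type*} [DecidableEq α] {k : ℕ} {a b : Set.powersetCard α k} {x y : α}
  {ℬ : Set (Set.powersetCard α k)}

theorem swap_mem_stabilizer (h : x ∈ a ↔ y ∈ a) : Equiv.swap x y ∈ stabilizer (Equiv.Perm α) a := by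
  rw [Set.powersetCard.stabilizer_coe, mem_stabilizer_set]
  intro z
  rw [Equiv.Perm.smul_def, Equiv.swap_apply_def]
  split_ifs with hzx hzy
  · rw [hzx]
    exact h.symm
  · rw [hzy]
    exact h
  · rfl

theorem eq_univ_of_isBlock_of_swap_smul_mem [Finite α] (hℬ : IsBlock (Equiv.Perm α) ℬ)
    (ha : a ∈ ℬ) (hx : x ∈ a) (hy : y ∉ a) (hxy : Equiv.swap x y • a ∈ ℬ) : ℬ = Set.univ := by
  have hswap_fix {u v : α} (h : u ∈ a ↔ v ∈ a) :
      Equiv.swap u v ∈ stabilizer (Equiv.Perm α) ℬ :=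
    hℬ.stabilizer_le ha (swap_mem_stabilizer h)
  -- `swap u v` is conjugate to `swap x y` under permutations that fix `a`.
  have hswap_move {u v : α} (hu : u ∈ a) (hv : v ∉ a) :
      Equiv.swap u v ∈ stabilizer (Equiv.Perm α) ℬ := by
    let σ := Equiv.swap x u * Equiv.swap y v
    have hσ : σ ∈ stabilizer (Equiv.Perm α) ℬ :=
      mul_mem (hswap_fix (iff_of_true hx hu)) (hswap_fix (iff_of_false hy hv))
    have hσx : σ x = u := by
      rw [Equiv.Perm.mul_apply, Equiv.swap_apply_of_ne_of_ne (ne_of_mem_of_not_mem hx hy)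
        (ne_of_mem_of_not_mem hx hv), Equiv.swap_apply_left]
    have hσy : σ y = v := by
      rw [Equiv.Perm.mul_apply, Equiv.swap_apply_left, Equiv.swap_apply_of_ne_of_ne
        (ne_of_mem_of_not_mem hx hv).symm (ne_of_mem_of_not_mem hu hv).symm]
    rw [← hσx, ← hσy, Equiv.swap_apply_apply]
    exact mul_mem (mul_mem hσ (hℬ.smul_eq_of_mem ha hxy)) (inv_mem hσ)
  have htop : stabilizer (Equiv.Perm α) ℬ = ⊤ := by
    rw [eq_top_iff, ← Equiv.Perm.closure_isSwap, Subgroup.closure_le]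
    rintro _ ⟨u, v, -, rfl⟩
    by_cases hu : u ∈ a <;> by_cases hv : v ∈ a
    · exact hswap_fix (iff_of_true hu hv)
    · exact hswap_move hu hv
    · rw [Equiv.swap_comm]
      exact hswap_move hv hu
    · exact hswap_fix (iff_of_false hu hv)
  refine Set.eq_univ_of_forall fun c ↦ ?_
  have := Set.powersetCard.isPretransitive (α := α) (n := k)
  obtain ⟨g, rfl⟩ := exists_smul_eq (Equiv.Perm α) a c
  have hg : g • ℬ = ℬ := mem_stabilizer_iff.mp (htop ▸ Subgroup.mem_top g)
  exact hg ▸ Set.smul_mem_smul_set ha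

theorem coe_eq_compl_of_isBlock [Fintype α] (hℬ : IsBlock (Equiv.Perm α) ℬ) (hne : ℬ ≠ Set.univ)
    (ha : a ∈ ℬ) (hb : b ∈ ℬ) (hab : a ≠ b) : (b : Finset α) = (a : Finset α)ᶜ := by
  obtain ⟨y, hya, hyb⟩ := (Set.powersetCard.exists_mem_notMem_iff_ne a b).mp hab
  obtain ⟨x, hxb, hxa⟩ := (Set.powersetCard.exists_mem_notMem_iff_ne b a).mp hab.symm
  have hswap {u v : α} (h : u ∈ a ↔ v ∈ a) : Equiv.swap u v • b ∈ ℬ :=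
    (mem_stabilizer_set.mp (hℬ.stabilizer_le ha (swap_mem_stabilizer h)) b).mpr hb
  ext z
  rw [Finset.mem_compl, Set.powersetCard.mem_coe_iff, Set.powersetCard.mem_coe_iff]
  constructor
  · intro hzb hza
    exact hne (eq_univ_of_isBlock_of_swap_smul_mem hℬ hb hzb hyb (hswap (iff_of_true hza hya)))
  · intro hza
    by_contra hzb
    exact hne (eq_univ_of_isBlock_of_swap_smul_mem hℬ hb hxb hzb (hswap (iff_of_false hxa hza)))

end Block

section CrossIntersecting

variable {α : Type*} [DecidableEq α] {k s : ℕ}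

/-- The relation of meeting in at least `s` elements. Its polar of a family `𝒜` is the largest
family of `k`-sets that is `s`-cross-intersecting with `𝒜`. -/
def MeetsIn (s : ℕ) (a b : Set.powersetCard α k) : Prop :=
  s ≤ #((a : Finset α) ∩ b)

instance : Std.Symm (MeetsIn (α := α) (k := k) s) where
  symm a b h := by rwa [MeetsIn, Finset.inter_comm]

theorem meetsIn_smul_smul_iff (g : Equiv.Perm α) (a b : Set.powersetCard α k) :
    MeetsIn s (g • a) (g • b) ↔ MeetsIn s a b := by
  simp only [MeetsIn, Set.powersetCard.coe_smul, ← smul_finset_inter, card_smul_finset]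

theorem MeetsIn.le {a b : Set.powersetCard α k} (h : MeetsIn s a b) : s ≤ k :=
  (h.trans (card_le_card inter_subset_left)).trans_eq (Set.powersetCard.card_eq a)

theorem meetsIn_self_iff {a : Set.powersetCard α k} : MeetsIn s a a ↔ s ≤ k := by
  rw [MeetsIn, Finset.inter_self, Set.powersetCard.card_eq]

variable [Fintype α]

theorem exists_not_meetsIn (hs : 1 ≤ s) (hα : 2 * k < Fintype.card α + s)
    (b : Set.powersetCard α k) : ∃ a : Set.powersetCard α k, ¬ MeetsIn s a b := by
  have hcompl : #(b : Finset α)ᶜ = Fintype.card α - k := by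
    rw [card_compl, Set.powersetCard.card_eq]
  have hk : k ≤ Fintype.card α := Set.powersetCard.card_eq b ▸ card_le_univ _
  suffices ∃ a : Finset α, #a = k ∧ #(a ∩ b) < s by
    obtain ⟨a, ha, hab⟩ := this
    exact ⟨⟨a, ha⟩, hab.not_ge⟩
  obtain hle | hle := le_total k #(b : Finset α)ᶜ
  · obtain ⟨a, hab, ha⟩ := exists_subset_card_eq hle
    refine ⟨a, ha, ?_⟩
    rw [disjoint_iff_inter_eq_empty.mp (subset_compl_iff_disjoint_right.mp hab), card_empty]
    exact hs
  · obtain ⟨a, hba, ha⟩ := exists_superset_card_eq hle hk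
    refine ⟨a, ha, ?_⟩
    have hinter : #(a ∩ b) = #a - #(b : Finset α)ᶜ := by
      rw [← card_sdiff_of_subset hba, sdiff_compl, inf_eq_inter]
    omega

theorem upperPolar_meetsIn_univ (hs : 1 ≤ s) (hα : 2 * k < Fintype.card α + s) :
    upperPolar (MeetsIn (α := α) (k := k) s) Set.univ = ∅ := by
  refine Set.eq_empty_of_forall_notMem fun b hb ↦ ?_
  obtain ⟨a, hab⟩ := exists_not_meetsIn hs hα b
  exact hab (hb (Set.mem_univ a))

theorem polarWeight_le_of_isPolarAtom (hs : 1 ≤ s) (hα : 2 * k < Fintype.card α + s)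
    {𝒯 : Set (Set.powersetCard α k)} (h𝒯 : IsPolarAtom (MeetsIn s) 𝒯)
    {a : Set.powersetCard α k} (ha : a ∈ 𝒯) :
    polarWeight (MeetsIn s) 𝒯 ≤ (upperPolar (MeetsIn s) {a}).ncard + 1 := by
  have hanti : upperPolar (MeetsIn s) 𝒯 ⊆ upperPolar (MeetsIn s) {a} :=
    upperPolar_anti _ (Set.singleton_subset_iff.mpr ha)
  have hne : 𝒯 ≠ Set.univ := by
    rintro rfl
    exact h𝒯.upperPolar_nonempty.ne_empty (upperPolar_meetsIn_univ hs hα)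
  have hcompl {b : Set.powersetCard α k} (hb : b ∈ 𝒯) (hab : a ≠ b) :
      (b : Finset α) = (a : Finset α)ᶜ :=
    coe_eq_compl_of_isBlock (h𝒯.isBlock meetsIn_smul_smul_iff) hne ha hb hab
  obtain rfl | ⟨b, hb, hba⟩ := Set.eq_singleton_or_nontrivial ha |>.imp_right (·.exists_ne a)
  · rw [polarWeight, Set.ncard_singleton, add_comm]
  · have hpair : 𝒯.ncard ≤ 2 := by
      refine (Set.ncard_le_ncard (t := {a, b}) fun c hc ↦ ?_).trans (Set.ncard_pair hba.symm).le
      refine or_iff_not_imp_left.mpr fun hca ↦ Subtype.ext ?_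
      rw [hcompl hc (Ne.symm hca), hcompl hb hba.symm]
    have hmem : a ∈ upperPolar (MeetsIn s) {a} := by
      obtain ⟨c, hc⟩ := h𝒯.upperPolar_nonempty
      exact (mem_upperPolar_singleton _).mpr (meetsIn_self_iff.mpr (hc ha).le)
    have hnotMem : a ∉ upperPolar (MeetsIn s) 𝒯 := by
      intro h
      have hle := h hb
      rw [MeetsIn, hcompl hb hba.symm, inter_comm, inter_compl, card_empty] at hle
      omega
    have hlt := Set.ncard_lt_ncard (hanti.ssubset_of_mem_notMem hmem hnotMem)
    unfold polarWeight
    omega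

theorem ncard_add_ncard_le_of_meetsIn (hs : 1 ≤ s) (hα : 2 * k < Fintype.card α + s)
    {𝒜 ℬ : Set (Set.powersetCard α k)} (h𝒜 : 𝒜.Nonempty) (hℬ : ℬ.Nonempty)
    (hcross : ∀ a ∈ 𝒜, ∀ b ∈ ℬ, MeetsIn s a b) (c : Set.powersetCard α k) :
    𝒜.ncard + ℬ.ncard ≤ {b | MeetsIn s b c}.ncard + 1 := by
  have hsub : ℬ ⊆ upperPolar (MeetsIn s) 𝒜 := fun b hb a ha ↦ hcross a ha b hb
  obtain ⟨𝒯, h𝒯⟩ := exists_isPolarAtom h𝒜 (hℬ.mono hsub)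
  obtain ⟨a, ha⟩ := h𝒯.nonempty
  have := Set.powersetCard.isPretransitive (α := α) (n := k)
  calc 𝒜.ncard + ℬ.ncard
    _ ≤ polarWeight (MeetsIn s) 𝒜 := Nat.add_le_add_left (Set.ncard_le_ncard hsub) _
    _ ≤ polarWeight (MeetsIn s) 𝒯 := h𝒯.polarWeight_le h𝒜 (hℬ.mono hsub)
    _ ≤ (upperPolar (MeetsIn s) {a}).ncard + 1 := polarWeight_le_of_isPolarAtom hs hα h𝒯 ha
    _ = (upperPolar (MeetsIn s) {c}).ncard + 1 := by
      rw [ncard_upperPolar_singleton_eq meetsIn_smul_smul_iff a c]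
    _ = {b | MeetsIn s b c}.ncard + 1 := by
      congr 2
      ext b
      exact (mem_upperPolar_singleton _).trans comm

end CrossIntersecting

section GroundSet

variable {α : Type*} {X : Finset α} {k : ℕ}

/-- A `k`-element set of elements of `X`, viewed as a finset of the ambient type. -/
def ambientFinset (a : Set.powersetCard X k) : Finset α :=
  (a : Finset X).map (.subtype _)

theorem ambientFinset_injective : Function.Injective (ambientFinset (X := X) (k := k)) :=
  (map_injective _).comp Subtype.val_injective

theorem range_ambientFinset :
    Set.range (ambientFinset (X := X) (k := k)) = X.powersetCard k := by
  ext a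
  rw [mem_coe, mem_powersetCard]
  constructor
  · rintro ⟨b, rfl⟩
    exact ⟨map_subtype_subset _, (card_map _).trans (Set.powersetCard.card_eq b)⟩
  · classical
    rintro ⟨haX, ha⟩
    have hmap : (a.subtype (· ∈ X)).map (.subtype _) = a := subtype_map_of_mem haX
    exact ⟨⟨a.subtype (· ∈ X), by rw [Set.powersetCard.mem_iff, ← card_map, hmap, ha]⟩, hmap⟩

theorem ncard_preimage_ambientFinset {𝒜 : Finset (Finset α)} (h𝒜 : 𝒜 ⊆ X.powersetCard k) :
    (ambientFinset (X := X) (k := k) ⁻¹' 𝒜).ncard = #𝒜 := by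
  rw [Set.ncard_preimage_of_injective_subset_range ambientFinset_injective
    (range_ambientFinset ▸ coe_subset.mpr h𝒜), Set.ncard_coe_finset]

theorem nonempty_preimage_ambientFinset {𝒜 : Finset (Finset α)} (h𝒜 : 𝒜 ⊆ X.powersetCard k)
    (hne : 𝒜.Nonempty) : (ambientFinset (X := X) (k := k) ⁻¹' 𝒜).Nonempty :=
  Set.Nonempty.preimage' (coe_nonempty.mpr hne) (range_ambientFinset ▸ coe_subset.mpr h𝒜)

theorem meetsIn_iff_ambientFinset [DecidableEq α] {s : ℕ} {a b : Set.powersetCard X k} :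
    MeetsIn s a b ↔ s ≤ #(ambientFinset a ∩ ambientFinset b) := by
  rw [MeetsIn, ambientFinset, ambientFinset, ← map_inter, card_map]

end GroundSet

theorem s_cross_intersecting_upper_bound_general {α : Type*} [DecidableEq α] {X K : Finset α}
    {k s : ℕ} (hs : 1 ≤ s) (hX : 2 * k < #X + s) (hK : K ∈ X.powersetCard k)
    {𝒜 ℬ : Finset (Finset α)} (h𝒜 : 𝒜 ⊆ X.powersetCard k) (hℬ : ℬ ⊆ X.powersetCard k)
    (h𝒜ne : 𝒜.Nonempty) (hℬne : ℬ.Nonempty) (hcross : ∀ a ∈ 𝒜, ∀ b ∈ ℬ, s ≤ #(a ∩ b)) :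
    #𝒜 + #ℬ ≤ #{C ∈ X.powersetCard k | s ≤ #(C ∩ K)} + 1 := by
  obtain ⟨c, rfl⟩ : K ∈ Set.range (ambientFinset (X := X) (k := k)) :=
    range_ambientFinset ▸ mem_coe.mpr hK
  have hpreimage :
      ambientFinset ⁻¹' ↑((X.powersetCard k).filter fun C ↦ s ≤ #(C ∩ ambientFinset c)) =
        {b : Set.powersetCard X k | MeetsIn s b c} := by
    ext b
    have hb : ambientFinset b ∈ X.powersetCard k := mem_coe.mp (range_ambientFinset ▸ ⟨b, rfl⟩)
    rw [Set.mem_preimage, mem_coe, mem_filter, and_iff_right hb]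
    exact meetsIn_iff_ambientFinset.symm
  rw [← ncard_preimage_ambientFinset h𝒜, ← ncard_preimage_ambientFinset hℬ,
    ← ncard_preimage_ambientFinset (filter_subset _ _), hpreimage]
  exact ncard_add_ncard_le_of_meetsIn hs (by rwa [Fintype.card_coe])
    (nonempty_preimage_ambientFinset h𝒜 h𝒜ne) (nonempty_preimage_ambientFinset hℬ hℬne)
    (fun a ha b hb ↦ meetsIn_iff_ambientFinset.mpr (hcross _ ha _ hb)) c

theorem s_cross_intersecting_upper_bound (n k s : ℕ) (hs : 1 ≤ s) (hsk : s < k)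
    (hn : 2 * k - s < n)
    (A B : Finset (Finset ℕ))
    (hA : A ⊆ (Finset.range n).powersetCard k)
    (hB : B ⊆ (Finset.range n).powersetCard k)
    (hAne : A.Nonempty) (hBne : B.Nonempty)
    (hcross : ∀ a ∈ A, ∀ b ∈ B, s ≤ (a ∩ b).card) :
    A.card + B.card ≤
      (((Finset.range n).powersetCard k).filter
        (fun C => s ≤ (C ∩ Finset.range k).card)).card + 1 :=
  have hK : range k ∈ (range n).powersetCard k :=
    mem_powersetCard.mpr ⟨range_subset_range.mpr (by omega), card_range k⟩
  s_cross_intersecting_upper_bound_general hs (by rw [card_range]; omega) hK hA hB hAne hBne hcross
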